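/- For every integer r ≥ 1 and every subset W ⊆ V(G_r) with |W| ≤ 3r² (i.e. |W| ≤ |V(G_r)|/2), the boundary of W in the finite hexagonal grid satisfies |ℬ_{G_r}(W)| ≥ c · √(|W| + c²/4) − c²/2 with c = 0.6053. -/

import Mathlib

/-- Adjacency of the infinite hexagonal grid `G∞` in brick-wall coordinates on `ℤ × ℤ`:
`(x,y)` and `(x',y')` are adjacent iff `y' = y` and `|x' - x| = 1`, or
`x' = x` and `|y' - y| = 1` and `x + min y y'` is even. -/
def hexAdj (v w : ℤ × ℤ) : Prop :=
  (v.2 = w.2 ∧ (v.1 - w.1).natAbs = 1) ∨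
  (v.1 = w.1 ∧ (v.2 - w.2).natAbs = 1 ∧ Even (v.1 + min v.2 w.2))

/-- The neighborhood `𝒩(W)`: vertices not in `W` adjacent to some vertex of `W`. -/
def hexNbhd (W : Set (ℤ × ℤ)) : Set (ℤ × ℤ) :=
  {v | v ∉ W ∧ ∃ w ∈ W, hexAdj v w}

/-- The boundary `ℬ(W)`: vertices of `W` adjacent to some vertex not in `W`. -/
def hexBdry (W : Set (ℤ × ℤ)) : Set (ℤ × ℤ) :=
  {v | v ∈ W ∧ ∃ w, w ∉ W ∧ hexAdj v w}

/-- The outgoing edges `ℰ(W)`, encoded as ordered pairs `(v, w)` with `v ∈ W`, `w ∉ W`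
and `v` adjacent to `w`; each edge with exactly one endpoint in `W` corresponds to
exactly one such pair. -/
def hexCutEdges (W : Set (ℤ × ℤ)) : Set ((ℤ × ℤ) × (ℤ × ℤ)) :=
  {p | p.1 ∈ W ∧ p.2 ∉ W ∧ hexAdj p.1 p.2}

/-- The hexagonal cell `C(a,b)`, with vertex set `{(2a+b+i, b+j) : i ∈ {0,1,2}, j ∈ {0,1}}`. -/
def hexCell (a b : ℤ) : Set (ℤ × ℤ) :=
  {(2*a+b, b), (2*a+b+1, b), (2*a+b+2, b),
   (2*a+b, b+1), (2*a+b+1, b+1), (2*a+b+2, b+1)}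

/-- The vertex set `V(G_r)` of the finite hexagonal grid of radius `r`: the union of the
cells `C(a,b)` with `(|a| + |b| + |a+b|)/2 ≤ r - 1`. -/
def gridVerts (r : ℕ) : Set (ℤ × ℤ) :=
  {v | ∃ a b : ℤ, a.natAbs + b.natAbs + (a+b).natAbs ≤ 2*(r-1) ∧ v ∈ hexCell a b}

/-- `𝒩_{G_r}(W)`: vertices of `V(G_r) \ W` adjacent to some vertex of `W`. -/
def hexNbhdIn (r : ℕ) (W : Set (ℤ × ℤ)) : Set (ℤ × ℤ) :=
  {v | v ∈ gridVerts r ∧ v ∉ W ∧ ∃ w ∈ W, hexAdj v w}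

/-- `ℬ_{G_r}(W)`: vertices of `W` adjacent to some vertex of `V(G_r) \ W`. -/
def hexBdryIn (r : ℕ) (W : Set (ℤ × ℤ)) : Set (ℤ × ℤ) :=
  {v | v ∈ W ∧ ∃ w, w ∈ gridVerts r ∧ w ∉ W ∧ hexAdj v w}

/-- `ℰ_{G_r}(W)`: the edges of `G_r` with exactly one endpoint in `W ⊆ V(G_r)`, encoded
as ordered pairs `(v, w)` with `v ∈ W`, `w ∈ V(G_r) \ W`, `v` adjacent to `w`. -/
def hexCutEdgesIn (r : ℕ) (W : Set (ℤ × ℤ)) : Set ((ℤ × ℤ) × (ℤ × ℤ)) :=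
  {p | p.1 ∈ W ∧ p.2 ∈ gridVerts r ∧ p.2 ∉ W ∧ hexAdj p.1 p.2}

/-- The index `ind_i(x,y)` of the direction-`i` row containing `(x,y)`
(directions numbered `0, 1, 2` for the paper's `1, 2, 3`):
`ind_1 = y`, `ind_2 = ⌊(y-x)/2⌋`, `ind_3 = ⌊(x+y)/2⌋`. -/
def rowInd : Fin 3 → ℤ × ℤ → ℤ
  | 0, v => v.2
  | 1, v => Int.fdiv (v.2 - v.1) 2
  | 2, v => Int.fdiv (v.1 + v.2) 2

/-- The linear parameter `p_i` along direction-`i` rows: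
`p_1 = x`, `p_2 = x + y`, `p_3 = x - y`. -/
def rowParam : Fin 3 → ℤ × ℤ → ℤ
  | 0, v => v.1
  | 1, v => v.1 + v.2
  | 2, v => v.1 - v.2

/-- A set of integers is consecutive if it contains every integer between any two of
its elements. -/
def ConsecutiveSet (S : Set ℤ) : Prop :=
  ∀ a ∈ S, ∀ b ∈ S, ∀ k : ℤ, a ≤ k → k ≤ b → k ∈ S

/-- `v` is an outermost neighbor of `W` for direction `i`: the direction-`i` row of `v`
is gray, and the parameter of `v` is `m - 1` or `M + 1`, where `m` and `M` are the
minimum and maximum of the parameter over `W` intersected with that row. -/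
def IsOutermostNeighbor (W : Set (ℤ × ℤ)) (i : Fin 3) (v : ℤ × ℤ) : Prop :=
  (rowParam i v + 1 ∈ rowParam i '' {w ∈ W | rowInd i w = rowInd i v} ∧
    ∀ q ∈ rowParam i '' {w ∈ W | rowInd i w = rowInd i v}, rowParam i v + 1 ≤ q) ∨
  (rowParam i v - 1 ∈ rowParam i '' {w ∈ W | rowInd i w = rowInd i v} ∧
    ∀ q ∈ rowParam i '' {w ∈ W | rowInd i w = rowInd i v}, q ≤ rowParam i v - 1)

/-! The three row indices of a vertex, suitably signed and shifted, are coordinates that all lie in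
`[1 - r, r]` on `G_r` and whose sum is `1` or `2`. Let `B = ℬ_{G_r}(W)` and `n = |B|`. A row that
avoids `B` lies in `W` or in its complement, and two parallel rows of different colours are
separated by at least as many points of `B` as there are disjoint strips joining them; hence, when
`n` is small, the long rows avoiding `B` all have the same colour, in all three directions. A row of
the other colour forces `B` to meet every long row crossing it, and counting shows that such rows
occur in at most one direction. In the two other directions, every vertex of the minority colour
thus lies on one of the at most `n` rows meeting `B`, so there are at most `2 n²` such vertices.
When `n` is large, `|W| ≤ 3 r²` suffices. -/

section Pigeonhole

variable {α ι : Type*} [DecidableEq ι]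

theorem exists_mem_Icc_notMem_image (B : Finset α) (x : α → ℤ) {a b : ℤ}
    (h : B.card < b + 1 - a) : ∃ c, a ≤ c ∧ c ≤ b ∧ c ∉ B.image x := by
  have hcard : (B.image x).card < (Finset.Icc a b).card := by
    have := Finset.card_image_le (s := B) (f := x)
    rw [Int.card_Icc]
    omega
  obtain ⟨c, hc, hcB⟩ := Finset.exists_mem_notMem_of_card_lt_card hcard
  exact ⟨c, (Finset.mem_Icc.1 hc).1, (Finset.mem_Icc.1 hc).2, hcB⟩

theorem card_le_card_filter_of_subset_image {B : Finset α} {C : Finset ι} {x : α → ι}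
    (hx : C ⊆ B.image x) : C.card ≤ {v ∈ B | x v ∈ C}.card := by
  refine (Finset.card_le_card fun c hc => ?_).trans (Finset.card_image_le (f := x))
  obtain ⟨v, hv, rfl⟩ := Finset.mem_image.1 (hx hc)
  exact Finset.mem_image_of_mem x (Finset.mem_filter.2 ⟨hv, hc⟩)

theorem three_mul_card_le_two_mul_card {B : Finset α} {C : Finset ι} {x y z : α → ι}
    (hx : C ⊆ B.image x) (hy : C ⊆ B.image y) (hz : C ⊆ B.image z)
    (hC : ∀ v ∈ B, x v ∈ C → y v ∈ C → z v ∉ C) : 3 * C.card ≤ 2 * B.card := by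
  have hcount : {v ∈ B | x v ∈ C}.card + {v ∈ B | y v ∈ C}.card + {v ∈ B | z v ∈ C}.card ≤
      B.card * 2 := by
    simp only [Finset.card_filter, ← Finset.sum_add_distrib]
    refine Finset.sum_le_card_nsmul _ _ _ fun v hv => ?_
    have := hC v hv
    split_ifs <;> simp_all
  have := card_le_card_filter_of_subset_image hx
  have := card_le_card_filter_of_subset_image hy
  have := card_le_card_filter_of_subset_image hz
  omega

end Pigeonhole

/-- `x`, `y` and `z` are the row coordinates of the honeycomb lattice for its three directions of
rows. They are normalized so that the coordinate sum is `1` on one class of the bipartition and `2`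
on the other, and so that `G_r` is a cube in these coordinates. As any permutation of `x`, `y`, `z`
has the same properties, statements about particular directions transfer to the others. -/
structure IsHexCoord (x y z : ℤ × ℤ → ℤ) : Prop where
  sum_eq (v) : x v + y v + z v = 1 ∨ x v + y v + z v = 2
  ext {v w} : x v = x w → y v = y w → z v = z w → v = w
  exists_eq {a b c : ℤ} : a + b + c = 1 ∨ a + b + c = 2 → ∃ v, x v = a ∧ y v = b ∧ z v = c
  adj_iff (v w) :
    hexAdj v w ↔ (x v - x w).natAbs + (y v - y w).natAbs + (z v - z w).natAbs = 1
  mem_gridVerts_iff {r : ℕ} (hr : 1 ≤ r) (v) : v ∈ gridVerts r ↔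
    ((1 - r : ℤ) ≤ x v ∧ x v ≤ r) ∧ ((1 - r : ℤ) ≤ y v ∧ y v ≤ r) ∧
      ((1 - r : ℤ) ≤ z v ∧ z v ≤ r)

theorem mem_hexCell_iff {v : ℤ × ℤ} {a b : ℤ} : v ∈ hexCell a b ↔
    (rowInd 0 v = b ∨ rowInd 0 v = b + 1) ∧ (-rowInd 1 v = a ∨ -rowInd 1 v = a + 1) ∧
      (1 - rowInd 2 v = -(a + b) ∨ 1 - rowInd 2 v = -(a + b) + 1) := by
  obtain ⟨p, q⟩ := v
  simp only [hexCell, rowInd, Int.fdiv_eq_ediv_of_nonneg _ zero_le_two, Set.mem_insert_iff,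
    Set.mem_singleton_iff, Prod.mk.injEq]
  omega

/-- The cells around a vertex are obtained by lowering one coordinate if the coordinate sum is `1`
and two coordinates if it is `2`. Lowering the largest coordinates keeps the cell inside `G_r`. -/
theorem exists_hexCell_coord {r : ℕ} {x y z : ℤ}
    (hsum : x + y + z = 1 ∨ x + y + z = 2) (hx : 1 - r ≤ x ∧ x ≤ r) (hy : 1 - r ≤ y ∧ y ≤ r)
    (hz : 1 - r ≤ z ∧ z ≤ r) : ∃ a b : ℤ, a.natAbs + b.natAbs + (a + b).natAbs ≤ 2 * (r - 1) ∧
      (x = b ∨ x = b + 1) ∧ (y = a ∨ y = a + 1) ∧ (z = -(a + b) ∨ z = -(a + b) + 1) := by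
  rcases hsum with hsum | hsum
  · by_cases hmax_x : y ≤ x ∧ z ≤ x
    · exact ⟨y, x - 1, by omega⟩
    by_cases hmax_y : x ≤ y ∧ z ≤ y
    · exact ⟨y - 1, x, by omega⟩
    exact ⟨y, x, by omega⟩
  · by_cases hmin_x : x ≤ y ∧ x ≤ z
    · exact ⟨y - 1, x, by omega⟩
    by_cases hmin_y : y ≤ x ∧ y ≤ z
    · exact ⟨y, x - 1, by omega⟩
    exact ⟨y - 1, x - 1, by omega⟩

theorem isHexCoord_rowInd :
    IsHexCoord (rowInd 0) (fun v => -rowInd 1 v) (fun v => 1 - rowInd 2 v) := by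
  have hdiv (k : ℤ) : k.fdiv 2 = k / 2 := Int.fdiv_eq_ediv_of_nonneg k zero_le_two
  have hsum (v : ℤ × ℤ) : rowInd 0 v + -rowInd 1 v + (1 - rowInd 2 v) = 1 ∨
      rowInd 0 v + -rowInd 1 v + (1 - rowInd 2 v) = 2 := by
    simp only [rowInd, hdiv]
    omega
  refine ⟨hsum, fun {v w} hx hy hz => ?_, fun {a b c} _ => ⟨(b - c + 1, a), ?_⟩,
    fun v w => ?_, fun {r} hr v => ⟨?_, fun ⟨hx, hy, hz⟩ => ?_⟩⟩
  · simp only [rowInd, hdiv] at hx hy hz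
    exact Prod.ext (by omega) hx
  · dsimp only [rowInd]
    rw [hdiv, hdiv]
    omega
  · simp only [hexAdj, rowInd, hdiv, Int.even_iff]
    omega
  · rintro ⟨a, b, hab, hv⟩
    rw [mem_hexCell_iff] at hv
    omega
  · obtain ⟨a, b, hab, hv⟩ := exists_hexCell_coord (hsum v) hx hy hz
    exact ⟨a, b, hab, mem_hexCell_iff.2 hv⟩

/-- The row `x = a` of `G_r`, where `x` is one of three row coordinates. -/
def hexRow (r : ℕ) (x : ℤ × ℤ → ℤ) (a : ℤ) : Set (ℤ × ℤ) :=
  {v | v ∈ gridVerts r ∧ x v = a}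

/-- `B` separates `S` from its complement: among the vertices of `G_r` outside `B`, adjacent ones
are both in `S` or both outside. Unlike `ℬ_{G_r}(S)`, this notion is symmetric in `S` and `Sᶜ`. -/
def HexSeparates (r : ℕ) (B : Finset (ℤ × ℤ)) (S : Set (ℤ × ℤ)) : Prop :=
  ∀ v ∈ gridVerts r \ B, ∀ w ∈ gridVerts r \ B, hexAdj v w → (v ∈ S ↔ w ∈ S)

theorem hexAdj_symm {v w : ℤ × ℤ} (h : hexAdj v w) : hexAdj w v := by
  rw [isHexCoord_rowInd.adj_iff] at h ⊢
  omega

namespace HexSeparates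

variable {r : ℕ} {B : Finset (ℤ × ℤ)} {S : Set (ℤ × ℤ)}

theorem of_coe_eq_hexBdryIn (hB : (B : Set (ℤ × ℤ)) = hexBdryIn r S) : HexSeparates r B S := by
  rw [HexSeparates, hB]
  rintro v ⟨hv, hvB⟩ w ⟨hw, hwB⟩ hvw
  constructor <;> intro hS <;> by_contra hS'
  · exact hvB ⟨hS, w, hw, hS', hvw⟩
  · exact hwB ⟨hS, v, hv, hS', hexAdj_symm hvw⟩

theorem compl (hS : HexSeparates r B S) : HexSeparates r B Sᶜ :=
  fun v hv w hw hvw => not_congr (hS v hv w hw hvw)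

theorem mem_iff_of_path (hS : HexSeparates r B S) {f : ℤ → ℤ × ℤ} {s t : ℤ} (hst : s ≤ t)
    (hadj : ∀ i, hexAdj (f i) (f (i + 1)))
    (hf : ∀ i, s ≤ i → i ≤ t → f i ∈ gridVerts r \ B) : f s ∈ S ↔ f t ∈ S := by
  induction t, hst using Int.leInduction with
  | base => rfl
  | succ t hst ih =>
    exact (ih fun i hi hi' => hf i hi (by omega)).trans
      (hS _ (hf t hst (by omega)) _ (hf (t + 1) (by omega) le_rfl) (hadj t))

end HexSeparates

/-- The indices of the rows of `G_r` with more than `2 n + 1` vertices; the row `x = a` has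
`2 min (2 r - a) (2 r - 1 + a) + 1` vertices. -/
def longRows (r n : ℕ) : Set ℤ :=
  {a | (1 - r ≤ a ∧ a ≤ r) ∧ (n : ℤ) < 2 * r - a ∧ (n : ℤ) < 2 * r - 1 + a}

theorem mem_longRows {r n : ℕ} {a : ℤ} : a ∈ longRows r n ↔
    (1 - r ≤ a ∧ a ≤ r) ∧ (n : ℤ) < 2 * r - a ∧ (n : ℤ) < 2 * r - 1 + a :=
  Iff.rfl

/-- The colour `S` dominates the direction `x`: all long rows in this direction that avoid `B` are
contained in `S`. Here a row is long if more than `|B|` disjoint strips cross it. -/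
def DominatesRows (r : ℕ) (B : Finset (ℤ × ℤ)) (S : Set (ℤ × ℤ)) (x : ℤ × ℤ → ℤ) : Prop :=
  ∀ a ∈ longRows r B.card, a ∉ B.image x → hexRow r x a ⊆ S

namespace IsHexCoord

variable {x y z : ℤ × ℤ → ℤ} {r : ℕ} {B : Finset (ℤ × ℤ)} {S : Set (ℤ × ℤ)} {a b : ℤ}

theorem rotate (h : IsHexCoord x y z) : IsHexCoord y z x where
  sum_eq v := by
    have := h.sum_eq v
    omega
  ext hy hz hx := h.ext hx hy hz
  exists_eq {b c a} habc := by
    obtain ⟨v, hx, hy, hz⟩ := h.exists_eq (a := a) (b := b) (c := c) (by omega)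
    exact ⟨v, hy, hz, hx⟩
  adj_iff v w := by
    rw [h.adj_iff]
    omega
  mem_gridVerts_iff hr v := by
    rw [h.mem_gridVerts_iff hr]
    tauto

theorem swap (h : IsHexCoord x y z) : IsHexCoord y x z where
  sum_eq v := by
    have := h.sum_eq v
    omega
  ext hy hx hz := h.ext hx hy hz
  exists_eq {b a c} habc := by
    obtain ⟨v, hx, hy, hz⟩ := h.exists_eq (a := a) (b := b) (c := c) (by omega)
    exact ⟨v, hy, hx, hz⟩
  adj_iff v w := by
    rw [h.adj_iff]
    omega
  mem_gridVerts_iff hr v := by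
    rw [h.mem_gridVerts_iff hr]
    tauto

theorem coord_sum_injective (h : IsHexCoord x y z) :
    Function.Injective fun v => (x v, y v, x v + y v + z v) := by
  intro v w hvw
  simp only [Prod.mk.injEq] at hvw
  exact h.ext hvw.1 hvw.2.1 (by omega)

theorem ncard_le_of_mapsTo (h : IsHexCoord x y z) {T : Set (ℤ × ℤ)} {X Y : Finset ℤ}
    (hx : Set.MapsTo x T X) (hy : Set.MapsTo y T Y) : T.ncard ≤ X.card * Y.card * 2 := by
  have hmaps : ∀ v ∈ T, (x v, y v, x v + y v + z v) ∈
      ((X ×ˢ Y ×ˢ {1, 2} : Finset (ℤ × ℤ × ℤ)) : Set (ℤ × ℤ × ℤ)) := fun v hv => by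
    simpa using ⟨hx hv, hy hv, h.sum_eq v⟩
  calc T.ncard ≤ ((X ×ˢ Y ×ˢ {1, 2} : Finset (ℤ × ℤ × ℤ)) : Set (ℤ × ℤ × ℤ)).ncard :=
        Set.ncard_le_ncard_of_injOn _ hmaps h.coord_sum_injective.injOn (Finset.finite_toSet _)
    _ = X.card * Y.card * 2 := by
        rw [Set.ncard_coe_finset, Finset.card_product, Finset.card_product, mul_assoc]
        rfl

theorem encard_rhombus (h : IsHexCoord x y z) (hr : 1 ≤ r) :
    {v | v ∈ gridVerts r ∧ 1 ≤ x v ∧ y v ≤ 0}.encard = 2 * r ^ 2 := by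
  have himage : (fun v => (x v, y v, x v + y v + z v)) ''
      {v | v ∈ gridVerts r ∧ 1 ≤ x v ∧ y v ≤ 0} =
      ((Finset.Icc (1 : ℤ) r ×ˢ Finset.Icc (1 - r : ℤ) 0 ×ˢ Finset.Icc (1 : ℤ) 2 :
        Finset (ℤ × ℤ × ℤ)) : Set (ℤ × ℤ × ℤ)) := by
    ext ⟨a, b, s⟩
    simp only [Set.mem_image, Set.mem_ofPred_eq, Prod.mk.injEq, Finset.coe_product, Set.mem_prod,
      Finset.coe_Icc, Set.mem_Icc]
    constructor
    · rintro ⟨v, ⟨hv, hxv, hyv⟩, rfl, rfl, rfl⟩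
      have := h.sum_eq v
      rw [h.mem_gridVerts_iff hr] at hv
      omega
    · intro hs
      obtain ⟨v, rfl, rfl, hz⟩ := h.exists_eq (a := a) (b := b) (c := s - a - b) (by omega)
      exact ⟨v, by rw [h.mem_gridVerts_iff hr]; omega, by omega⟩
  have hcard : (Finset.Icc (1 : ℤ) r ×ˢ Finset.Icc (1 - r : ℤ) 0 ×ˢ Finset.Icc (1 : ℤ) 2).card =
      2 * r ^ 2 := by
    simp only [Finset.card_product, Int.card_Icc, add_sub_cancel_right, Int.toNat_natCast,
      zero_add, sub_sub_cancel, show (2 : ℤ).toNat = 2 from rfl]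
    ring
  rw [← h.coord_sum_injective.encard_image, himage, Set.encard_coe_eq_coe_finsetCard, hcard]
  norm_cast

/-- Since the coordinates of a vertex are neither all positive nor all nonpositive, there is exactly
one cyclic sign change from positive to nonpositive, which splits `G_r` into three rhombi. -/
theorem encard_gridVerts (h : IsHexCoord x y z) (hr : 1 ≤ r) :
    (gridVerts r).encard = 6 * r ^ 2 := by
  have hunion : gridVerts r = {v | v ∈ gridVerts r ∧ 1 ≤ x v ∧ y v ≤ 0} ∪
      {v | v ∈ gridVerts r ∧ 1 ≤ y v ∧ z v ≤ 0} ∪ {v | v ∈ gridVerts r ∧ 1 ≤ z v ∧ x v ≤ 0} := by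
    ext v
    have := h.sum_eq v
    simp only [Set.mem_union, Set.mem_ofPred_eq, ← and_or_left, iff_self_and]
    omega
  rw [hunion, Set.encard_union_eq, Set.encard_union_eq, h.encard_rhombus hr,
    h.rotate.encard_rhombus hr, h.rotate.rotate.encard_rhombus hr]
  · ring
  · exact Set.disjoint_left.2 fun v hv hv' => by grind
  · exact Set.disjoint_left.2 fun v hv hv' => by grind

theorem hexRow_inter_nonempty (h : IsHexCoord x y z) (ha : 1 - r ≤ a ∧ a ≤ r)
    (hb : 1 - r ≤ b ∧ b ≤ r) (hab : 1 - r ≤ a + b ∧ a + b ≤ r + 1) :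
    (hexRow r x a ∩ hexRow r y b).Nonempty := by
  obtain ⟨v, rfl, rfl, hz⟩ :=
    h.exists_eq (a := a) (b := b) (c := if a + b ≤ r then 1 - a - b else 2 - a - b) (by grind)
  have hv : v ∈ gridVerts r := by
    rw [h.mem_gridVerts_iff (by omega)]
    split_ifs at hz <;> omega
  exact ⟨v, ⟨hv, rfl⟩, hv, rfl⟩

theorem exists_row_path (h : IsHexCoord x y z) (a : ℤ) :
    ∃ f : ℤ → ℤ × ℤ, (∀ t, x (f t) = a ∧ y (f t) - z (f t) = t) ∧
      ∀ t, hexAdj (f t) (f (t + 1)) := by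
  have hex (t : ℤ) : ∃ v, x v = a ∧ y v - z v = t := by
    obtain ⟨v, hx, hy, hz⟩ :=
      h.exists_eq (a := a) (b := (2 - a + t) / 2) (c := (2 - a + t) / 2 - t) (by omega)
    exact ⟨v, by omega⟩
  choose f hf using hex
  refine ⟨f, hf, fun t => ?_⟩
  have := hf t
  have := hf (t + 1)
  have := h.sum_eq (f t)
  have := h.sum_eq (f (t + 1))
  rw [h.adj_iff]
  omega

/-- The strip `2 k ≤ y - z ≤ 2 k + 1` is a zigzag path transversal to the rows of constant `x`. -/
theorem exists_strip_path (h : IsHexCoord x y z) (k : ℤ) :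
    ∃ f : ℤ → ℤ × ℤ, (∀ t, x (f t) = t / 2 + 1 ∧ (y (f t) - z (f t)) / 2 = k) ∧
      ∀ t, hexAdj (f t) (f (t + 1)) := by
  have hex (t : ℤ) : ∃ v, (x v = t / 2 + 1 ∧ x v - y v - z v = t) ∧ (y v - z v) / 2 = k := by
    obtain ⟨v, hx, hy, hz⟩ := h.exists_eq (a := t / 2 + 1) (b := (t / 2 + 2 - t) / 2 + k)
      (c := t / 2 + 1 - t - ((t / 2 + 2 - t) / 2 + k)) (by omega)
    exact ⟨v, by omega⟩
  choose f hf using hex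
  refine ⟨f, fun t => ⟨(hf t).1.1, (hf t).2⟩, fun t => ?_⟩
  have := hf t
  have := hf (t + 1)
  have := h.sum_eq (f t)
  have := h.sum_eq (f (t + 1))
  rw [h.adj_iff]
  omega

theorem mem_iff_of_mem_hexRow (h : IsHexCoord x y z) (hr : 1 ≤ r) (hS : HexSeparates r B S)
    (ha : a ∉ B.image x) {v w : ℤ × ℤ} (hv : v ∈ hexRow r x a) (hw : w ∈ hexRow r x a) :
    v ∈ S ↔ w ∈ S := by
  wlog hvw : y v - z v ≤ y w - z w generalizing v w
  · exact (this hw hv (by omega)).symm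
  obtain ⟨f, hf, hadj⟩ := h.exists_row_path a
  have hrow (u : ℤ × ℤ) (hu : x u = a) : f (y u - z u) = u := by
    have := hf (y u - z u)
    have := h.sum_eq u
    have := h.sum_eq (f (y u - z u))
    exact h.ext (by omega) (by omega) (by omega)
  rw [← hrow v hv.2, ← hrow w hw.2]
  refine hS.mem_iff_of_path hvw hadj fun t _ _ => ⟨?_, fun hB => ha ?_⟩
  · have := (h.mem_gridVerts_iff hr v).1 hv.1
    have := (h.mem_gridVerts_iff hr w).1 hw.1
    have := h.sum_eq v
    have := h.sum_eq w
    have := hv.2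
    have := hw.2
    have := h.sum_eq (f t)
    have := hf t
    rw [h.mem_gridVerts_iff hr]
    omega
  · exact Finset.mem_image.2 ⟨f t, hB, (hf t).1⟩

theorem hexRow_subset_of_mem (h : IsHexCoord x y z) (hr : 1 ≤ r) (hS : HexSeparates r B S)
    {v : ℤ × ℤ} (hv : v ∈ gridVerts r) (hvB : x v ∉ B.image x) (hvS : v ∈ S) :
    hexRow r x (x v) ⊆ S :=
  fun _ hw => (h.mem_iff_of_mem_hexRow hr hS hvB ⟨hv, rfl⟩ hw).1 hvS

theorem hexRow_subset_or_subset_compl (h : IsHexCoord x y z) (hr : 1 ≤ r)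
    (hS : HexSeparates r B S) (ha : a ∉ B.image x) :
    hexRow r x a ⊆ S ∨ hexRow r x a ⊆ Sᶜ := by
  by_contra! hne
  obtain ⟨⟨v, hv, hvS⟩, w, hw, hwS⟩ := hne.imp Set.not_subset.1 Set.not_subset.1
  exact hvS ((h.mem_iff_of_mem_hexRow hr hS ha hv hw).2 (not_not.1 hwS))

theorem exists_mem_strip (h : IsHexCoord x y z) (hS : HexSeparates r B S) {k : ℤ}
    (ha : 1 - r ≤ a) (hab : a ≤ b) (hb : b ≤ r) (haS : hexRow r x a ⊆ S)
    (hbS : hexRow r x b ⊆ Sᶜ) (hk : -(2 * r - b) ≤ 2 * k ∧ -(2 * r - 1 + a) ≤ 2 * k)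
    (hk' : 2 * k + 1 ≤ 2 * r - b ∧ 2 * k + 1 ≤ 2 * r - 1 + a) :
    ∃ v ∈ B, (y v - z v) / 2 = k := by
  by_contra! hB
  obtain ⟨f, hf, hadj⟩ := h.exists_strip_path k
  have hgrid (t : ℤ) (hat : 2 * a - 1 ≤ t) (htb : t ≤ 2 * b - 1) : f t ∈ gridVerts r := by
    have := hf t
    have := h.sum_eq (f t)
    rw [h.mem_gridVerts_iff (by omega)]
    omega
  have hpath := hS.mem_iff_of_path (s := 2 * a - 1) (t := 2 * b - 1) (by omega) hadj
    fun t hat htb => ⟨hgrid t hat htb, fun htB => hB _ htB (hf t).2⟩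
  have hsS : f (2 * a - 1) ∈ S :=
    haS ⟨hgrid _ (by omega) (by omega), by rw [(hf _).1]; omega⟩
  have htS : f (2 * b - 1) ∉ S :=
    hbS ⟨hgrid _ (by omega) (by omega), by rw [(hf _).1]; omega⟩
  exact htS (hpath.1 hsS)

theorem min_le_card_of_hexRow_subset (h : IsHexCoord x y z) (hS : HexSeparates r B S)
    (ha : 1 - r ≤ a) (hab : a ≤ b) (hb : b ≤ r)
    (haS : hexRow r x a ⊆ S) (hbS : hexRow r x b ⊆ Sᶜ) :
    min (2 * r - b) (2 * r - 1 + a) ≤ B.card := by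
  obtain ⟨l, hl⟩ : ∃ l, l = min (2 * r - b) (2 * r - 1 + a) := ⟨_, rfl⟩
  have hsub : Finset.Icc (-(l / 2)) ((l - 1) / 2) ⊆ B.image fun v => (y v - z v) / 2 := by
    intro k hk
    rw [Finset.mem_Icc] at hk
    exact Finset.mem_image.2
      (h.exists_mem_strip hS ha hab hb haS hbS (by omega) (by omega))
  have hcard := (Finset.card_le_card hsub).trans Finset.card_image_le
  rw [Int.card_Icc] at hcard
  omega

theorem dominatesRows_of_hexRow_subset (h : IsHexCoord x y z) (hS : HexSeparates r B S)
    (ha : a ∈ longRows r B.card) (haS : hexRow r x a ⊆ S) : DominatesRows r B S x := by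
  intro b hb hbB
  rw [mem_longRows] at ha hb
  refine (h.hexRow_subset_or_subset_compl (by omega) hS hbB).resolve_right fun hbS => ?_
  rcases le_total a b with hab | hba
  · have := h.min_le_card_of_hexRow_subset hS ha.1.1 hab hb.1.2 haS hbS
    omega
  · have := h.min_le_card_of_hexRow_subset hS.compl hb.1.1 hba ha.1.2 hbS
      (by rwa [compl_compl])
    omega

theorem exists_mem_longRows_notMem_image (x : ℤ × ℤ → ℤ) (hB : 5 * B.card + 4 ≤ 6 * r) :
    ∃ a ∈ longRows r B.card, a ∉ B.image x := by
  obtain ⟨a, ha, ha', haB⟩ := exists_mem_Icc_notMem_image B x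
    (a := max (1 - r) (B.card + 2 - 2 * r)) (b := min r (2 * r - B.card - 1)) (by omega)
  exact ⟨a, mem_longRows.2 (by omega), haB⟩

theorem dominatesRows_or_compl (h : IsHexCoord x y z) (hS : HexSeparates r B S)
    (hB : 5 * B.card + 4 ≤ 6 * r) : DominatesRows r B S x ∨ DominatesRows r B Sᶜ x := by
  have hr : 1 ≤ r := by omega
  obtain ⟨a, ha, haB⟩ := exists_mem_longRows_notMem_image x hB
  exact (h.hexRow_subset_or_subset_compl hr hS haB).imp
    (h.dominatesRows_of_hexRow_subset hS ha)
    (h.dominatesRows_of_hexRow_subset hS.compl ha)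

/-- Among the `|B| + 1` middle rows in direction `x`, one avoids `B`; it crosses more than `|B|`
long rows in direction `y`. -/
theorem dominatesRows_rotate (h : IsHexCoord x y z) (hS : HexSeparates r B S)
    (hB : 5 * B.card + 4 ≤ 6 * r) (hx : DominatesRows r B S x) : DominatesRows r B S y := by
  have hr : 1 ≤ r := by omega
  obtain ⟨a, ha, ha', haB⟩ := exists_mem_Icc_notMem_image B x
    (a := 1 - (B.card + 2) / 2) (b := (B.card + 2) / 2) (by omega)
  obtain ⟨b, hb, hb', hbB⟩ := exists_mem_Icc_notMem_image B y
    (a := max (max (1 - r) (B.card + 2 - 2 * r)) (1 - r - a))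
    (b := min (min r (2 * r - B.card - 1)) (r + 1 - a)) (by omega)
  obtain ⟨v, hva, hv, rfl⟩ :=
    h.hexRow_inter_nonempty (r := r) (a := a) (b := b) (by omega) (by omega) (by omega)
  have hvS : v ∈ S := hx a (mem_longRows.2 (by omega)) haB hva
  exact h.rotate.dominatesRows_of_hexRow_subset hS (mem_longRows.2 (by omega))
    (h.rotate.hexRow_subset_of_mem hr hS hv hbB hvS)

theorem mem_image_of_crosses_hexRow (h : IsHexCoord x y z) (hy : DominatesRows r B S y)
    (ha : 1 - r ≤ a ∧ a ≤ r) (haS : hexRow r x a ⊆ Sᶜ) (hb : b ∈ longRows r B.card)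
    (hab : 1 - r ≤ a + b ∧ a + b ≤ r + 1) : b ∈ B.image y := by
  by_contra hbB
  obtain ⟨v, hva, hvb⟩ := h.hexRow_inter_nonempty ha (mem_longRows.1 hb).1 hab
  exact haS hva (hy b hb hbB hvb)

theorem three_mul_card_le_of_crosses_hexRow (h : IsHexCoord x y z) (hx : DominatesRows r B S x)
    (hy : DominatesRows r B S y) (hz : DominatesRows r B S z) (ha : 1 - r ≤ a ∧ a ≤ r)
    (hb : 1 - r ≤ b ∧ b ≤ r) (haS : hexRow r x a ⊆ Sᶜ) (hbS : hexRow r y b ⊆ Sᶜ)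
    {C : Finset ℤ} (hC : ∀ c ∈ C, c ∈ longRows r B.card)
    (hCa : ∀ c ∈ C, 1 - r ≤ a + c ∧ a + c ≤ r + 1) (hCb : ∀ c ∈ C, 1 - r ≤ b + c ∧ b + c ≤ r + 1)
    (hC_two : ∀ v, x v ∈ C → y v ∈ C → z v ∉ C) : 3 * C.card ≤ 2 * B.card := by
  refine three_mul_card_le_two_mul_card (x := x) (y := y) (z := z) (fun c hc => ?_)
    (fun c hc => ?_) (fun c hc => ?_) fun v _ => hC_two v
  · exact h.swap.mem_image_of_crosses_hexRow hx hb hbS (hC c hc) (hCb c hc)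
  · exact h.mem_image_of_crosses_hexRow hy ha haS (hC c hc) (hCa c hc)
  · exact h.rotate.rotate.swap.mem_image_of_crosses_hexRow hz ha haS (hC c hc) (hCa c hc)

theorem not_hexRow_subset_compl_of_opposite (h : IsHexCoord x y z) (hB : 5 * B.card + 4 ≤ 6 * r)
    (hz : DominatesRows r B S z) (ha : 1 ≤ a ∧ a ≤ r) (hb : 1 - r ≤ b ∧ b ≤ 0)
    (haS : hexRow r x a ⊆ Sᶜ) : ¬ hexRow r y b ⊆ Sᶜ := by
  intro hbS
  obtain ⟨c, hc, hcB⟩ := exists_mem_longRows_notMem_image z hB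
  have := mem_longRows.1 hc
  rcases le_or_gt c 0 with hc0 | hc0
  · exact hcB (h.rotate.rotate.swap.mem_image_of_crosses_hexRow hz (by omega) haS hc (by omega))
  · exact hcB (h.rotate.mem_image_of_crosses_hexRow hz (by omega) hbS hc (by omega))

/-- If `a` and `b` are both positive or both nonpositive, the two rows cross all long rows whose
index has the other sign. There are `min r (2 r - |B| - 1)` such indices, and no vertex has all
three coordinates among them; the bound on `|B|` says that `2 |B| < 3 (2 r - |B| - 1)`. -/
theorem not_hexRow_subset_compl_of_hexRow_subset_compl (h : IsHexCoord x y z)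
    (hB : 5 * B.card + 4 ≤ 6 * r) (hx : DominatesRows r B S x) (hy : DominatesRows r B S y)
    (hz : DominatesRows r B S z) (ha : 1 - r ≤ a ∧ a ≤ r) (hb : 1 - r ≤ b ∧ b ≤ r)
    (haS : hexRow r x a ⊆ Sᶜ) : ¬ hexRow r y b ⊆ Sᶜ := by
  intro hbS
  have hcount {c d : ℤ} := h.three_mul_card_le_of_crosses_hexRow hx hy hz ha hb haS hbS
    (C := Finset.Icc c d)
  simp only [Finset.mem_Icc, mem_longRows, Int.card_Icc] at hcount
  rcases le_or_gt a 0 with ha0 | ha0 <;> rcases le_or_gt b 0 with hb0 | hb0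
  · have := hcount (c := 1) (d := min r (2 * r - B.card - 1)) (by omega) (by omega) (by omega)
      fun v => by have := h.sum_eq v; omega
    omega
  · exact h.swap.not_hexRow_subset_compl_of_opposite hB hz (by omega) (by omega) hbS haS
  · exact h.not_hexRow_subset_compl_of_opposite hB hz (by omega) (by omega) haS hbS
  · have := hcount (c := max (1 - r) (B.card + 2 - 2 * r)) (d := 0) (by omega) (by omega) (by omega)
      fun v => by have := h.sum_eq v; omega
    omega

theorem mapsTo_image_or_mapsTo_image (h : IsHexCoord x y z) (hS : HexSeparates r B S)
    (hB : 5 * B.card + 4 ≤ 6 * r) (hx : DominatesRows r B S x) :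
    Set.MapsTo x (gridVerts r \ S) (B.image x) ∨ Set.MapsTo y (gridVerts r \ S) (B.image y) := by
  by_contra! hne
  have hr : 1 ≤ r := by omega
  have hy := h.dominatesRows_rotate hS hB hx
  have hz := h.rotate.dominatesRows_rotate hS hB hy
  simp only [Set.MapsTo, not_forall, exists_prop, Finset.mem_coe] at hne
  obtain ⟨⟨v, ⟨hv, hvS⟩, hvB⟩, w, ⟨hw, hwS⟩, hwB⟩ := hne
  exact h.not_hexRow_subset_compl_of_hexRow_subset_compl hB hx hy hz
    ((h.mem_gridVerts_iff hr v).1 hv).1 ((h.mem_gridVerts_iff hr w).1 hw).2.1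
    (h.hexRow_subset_of_mem hr hS.compl hv hvB hvS)
    (h.rotate.hexRow_subset_of_mem hr hS.compl hw hwB hwS)

theorem ncard_diff_le_of_mapsTo_image (h : IsHexCoord x y z)
    (hx : Set.MapsTo x (gridVerts r \ S) (B.image x))
    (hy : Set.MapsTo y (gridVerts r \ S) (B.image y)) :
    (gridVerts r \ S).ncard ≤ 2 * B.card ^ 2 :=
  calc (gridVerts r \ S).ncard ≤ (B.image x).card * (B.image y).card * 2 :=
        h.ncard_le_of_mapsTo hx hy
    _ ≤ B.card * B.card * 2 := by gcongr <;> exact Finset.card_image_le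
    _ = 2 * B.card ^ 2 := by ring

theorem ncard_diff_le_of_dominatesRows (h : IsHexCoord x y z) (hS : HexSeparates r B S)
    (hB : 5 * B.card + 4 ≤ 6 * r) (hx : DominatesRows r B S x) :
    (gridVerts r \ S).ncard ≤ 2 * B.card ^ 2 := by
  have hy := h.dominatesRows_rotate hS hB hx
  have hz := h.rotate.dominatesRows_rotate hS hB hy
  have hxy := h.mapsTo_image_or_mapsTo_image hS hB hx
  have hyz := h.rotate.mapsTo_image_or_mapsTo_image hS hB hy
  have hzx := h.rotate.rotate.mapsTo_image_or_mapsTo_image hS hB hz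
  by_cases hxB : Set.MapsTo x (gridVerts r \ S) (B.image x)
  · rcases hyz with hyB | hzB
    · exact h.ncard_diff_le_of_mapsTo_image hxB hyB
    · exact h.rotate.rotate.ncard_diff_le_of_mapsTo_image hzB hxB
  · exact h.rotate.ncard_diff_le_of_mapsTo_image (hxy.resolve_left hxB) (hzx.resolve_right hxB)

end IsHexCoord

theorem ncard_gridVerts {r : ℕ} (hr : 1 ≤ r) : (gridVerts r).ncard = 6 * r ^ 2 := by
  rw [Set.ncard, isHexCoord_rowInd.encard_gridVerts hr]
  norm_cast

theorem gridVerts_finite {r : ℕ} (hr : 1 ≤ r) : (gridVerts r).Finite :=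
  Set.finite_of_ncard_pos (by rw [ncard_gridVerts hr]; positivity)

theorem HexSeparates.ncard_inter_le_or_ncard_diff_le {r : ℕ} {B : Finset (ℤ × ℤ)}
    {S : Set (ℤ × ℤ)} (hS : HexSeparates r B S) (hB : 5 * B.card + 4 ≤ 6 * r) :
    (gridVerts r ∩ S).ncard ≤ 2 * B.card ^ 2 ∨ (gridVerts r \ S).ncard ≤ 2 * B.card ^ 2 := by
  have h := isHexCoord_rowInd
  rcases h.dominatesRows_or_compl hS hB with hx | hx
  · exact .inr (h.ncard_diff_le_of_dominatesRows hS hB hx)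
  · rw [← Set.sdiff_compl]
    exact .inl (h.ncard_diff_le_of_dominatesRows hS.compl hB hx)

theorem ncard_le_two_mul_ncard_hexBdryIn_sq {r : ℕ} {W : Set (ℤ × ℤ)} (hWsub : W ⊆ gridVerts r)
    (hcard : W.ncard ≤ 3 * r ^ 2) (hB : 5 * (hexBdryIn r W).ncard + 4 ≤ 6 * r) :
    W.ncard ≤ 2 * (hexBdryIn r W).ncard ^ 2 := by
  have hr : 1 ≤ r := by omega
  have hG := gridVerts_finite hr
  have hBfin : (hexBdryIn r W).Finite := hG.subset fun v hv => hWsub hv.1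
  have hsep := HexSeparates.of_coe_eq_hexBdryIn hBfin.coe_toFinset
  rw [Set.ncard_eq_toFinset_card _ hBfin] at hB ⊢
  rcases hsep.ncard_inter_le_or_ncard_diff_le hB with hW | hWc
  · rwa [Set.inter_eq_self_of_subset_right hWsub] at hW
  · have := Set.ncard_sdiff_add_ncard_of_subset hWsub hG
    rw [ncard_gridVerts hr] at this
    omega

/-- If `n = |ℬ_{G_r}(W)|` satisfies `6 r ≤ 5 n + 3`, then `9 r² ≤ 8 n² + 3 n` because
`32 n² + 12 n - (5 n + 3)² = (7 n + 3) (n - 3)`, apart from small `n`. Equality occurs for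
`r = n = 3`. -/
theorem three_mul_ncard_le {r : ℕ} {W : Set (ℤ × ℤ)} (hWsub : W ⊆ gridVerts r)
    (hcard : W.ncard ≤ 3 * r ^ 2) :
    3 * W.ncard ≤ 8 * (hexBdryIn r W).ncard ^ 2 + 3 * (hexBdryIn r W).ncard := by
  by_cases hB : 5 * (hexBdryIn r W).ncard + 4 ≤ 6 * r
  · have := ncard_le_two_mul_ncard_hexBdryIn_sq hWsub hcard hB
    omega
  generalize (hexBdryIn r W).ncard = n at *
  suffices 9 * r ^ 2 ≤ 8 * n ^ 2 + 3 * n by omega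
  rcases lt_or_ge n 3 with hn | hn
  · have hrn : r ≤ n := by omega
    interval_cases n <;> interval_cases r <;> norm_num
  · nlinarith

theorem mul_sqrt_sub_le {c n b : ℝ} (hn : 0 ≤ n) (hb : 0 ≤ b)
    (h : c ^ 2 * n ≤ b ^ 2 + c ^ 2 * b) : c * √(n + c ^ 2 / 4) - c ^ 2 / 2 ≤ b := by
  have hsq : (c * √(n + c ^ 2 / 4)) ^ 2 ≤ (b + c ^ 2 / 2) ^ 2 := by
    rw [mul_pow, Real.sq_sqrt (by positivity)]
    linarith
  linarith [abs_le_of_sq_le_sq hsq (by positivity), le_abs_self (c * √(n + c ^ 2 / 4))]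

theorem finite_hex_boundary_isoperimetric_general {r : ℕ} {W : Set (ℤ × ℤ)}
    (hWsub : W ⊆ gridVerts r) (hcard : W.ncard ≤ 3 * r ^ 2) {c : ℝ} (hc : c ^ 2 ≤ 3 / 8) :
    c * √(W.ncard + c ^ 2 / 4) - c ^ 2 / 2 ≤ (hexBdryIn r W).ncard := by
  have hW : (3 * W.ncard : ℝ) ≤ 8 * (hexBdryIn r W).ncard ^ 2 + 3 * (hexBdryIn r W).ncard := by
    exact_mod_cast three_mul_ncard_le hWsub hcard
  refine mul_sqrt_sub_le (by positivity) (by positivity) ?_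
  nlinarith [sq_nonneg c, sq_nonneg ((hexBdryIn r W).ncard : ℝ)]

/-- For every `r ≥ 1` and every `W ⊆ V(G_r)` with `|W| ≤ 3r²`,
`|ℬ_{G_r}(W)| ≥ c·√(|W| + c²/4) - c²/2` with `c = 0.6053`. -/
theorem finite_hex_boundary_isoperimetric (r : ℕ) (hr : 1 ≤ r) (W : Set (ℤ × ℤ))
    (hWsub : W ⊆ gridVerts r) (hWfin : W.Finite) (hcard : W.ncard ≤ 3*r^2) :
    (0.6053 : ℝ) * Real.sqrt ((W.ncard : ℝ) + (0.6053 : ℝ)^2 / 4) - (0.6053 : ℝ)^2 / 2 ≤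
      ((hexBdryIn r W).ncard : ℝ) :=
  finite_hex_boundary_isoperimetric_general hWsub hcard (by norm_num)
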